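/- Suppose n ≥ 3, k ≥ 2, the partition is balanced, E ∈ ℝ^{V×V} is any symmetric matrix with ‖E‖₂ ≤ μ/(100·log n), and Ĝ := G + E. Then: for every i ∈ [k], |φ(λ_i(Ĝ)) − 1| < 1/2 and |φ(λ_i(G)) − 1| < 1/2; and for every i with k < i ≤ n, |φ(λ_i(Ĝ))| < n^{−log log n}. -/

import Mathlib

open MeasureTheory ProbabilityTheory Matrix Finset

namespace SBM

/-- Euclidean norm of a vector. -/
noncomputable def enorm {m : Type*} [Fintype m] (x : m → ℝ) : ℝ :=
  Real.sqrt (∑ i, x i ^ 2)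

/-- Spectral (ℓ²-operator) norm of a matrix. -/
noncomputable def specNorm {n : ℕ} (A : Matrix (Fin n) (Fin n) ℝ) : ℝ :=
  ‖Matrix.toEuclideanCLM (𝕜 := ℝ) A‖

/-- The `2 → ∞` norm: maximal Euclidean norm of a row. -/
noncomputable def n2i {n : ℕ} (A : Matrix (Fin n) (Fin n) ℝ) : ℝ :=
  ⨆ i : Fin n, enorm (A i)

/-- The mean matrix `G` of the SSBM with cluster assignment `cl`. -/
def meanMatrix (n k : ℕ) (p q : ℝ) (cl : Fin n → Fin k) : Matrix (Fin n) (Fin n) ℝ :=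
  Matrix.of fun u v => if cl u = cl v then p else q

/-- The size of cluster `i`. -/
def clusterSize {n k : ℕ} (cl : Fin n → Fin k) (i : Fin k) : ℕ :=
  (Finset.univ.filter fun v => cl v = i).card

/-- The partition is balanced: every cluster size is within a `1 ± 1/(16 log n)` factor
of `n / k`. -/
noncomputable def Balanced (n k : ℕ) (cl : Fin n → Fin k) : Prop :=
  ∀ i : Fin k,
    (1 - 1 / (16 * Real.log n)) * ((n : ℝ) / k) ≤ (clusterSize cl i : ℝ) ∧
    (clusterSize cl i : ℝ) ≤ (1 + 1 / (16 * Real.log n)) * ((n : ℝ) / k)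

/-- `lam, v` is a spectral decomposition of `A`: eigenvalues in non-increasing order with
an orthonormal eigenbasis. -/
def IsSpectralDecomp {n : ℕ} (A : Matrix (Fin n) (Fin n) ℝ)
    (lam : Fin n → ℝ) (v : Fin n → Fin n → ℝ) : Prop :=
  Antitone lam ∧
  (∀ i j, dotProduct (v i) (v j) = if i = j then (1 : ℝ) else 0) ∧
  A = ∑ i, lam i • Matrix.vecMulVec (v i) (v i)

/-- Orthogonal projection onto the span of the top `k` eigenvectors `v 0, …, v (k-1)`. -/
noncomputable def projTop {n : ℕ} (k : ℕ) (v : Fin n → Fin n → ℝ) :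
    Matrix (Fin n) (Fin n) ℝ :=
  ∑ i ∈ Finset.univ.filter (fun i : Fin n => (i : ℕ) < k), Matrix.vecMulVec (v i) (v i)

/-- The column of `A` indexed by `u`. -/
def column {n : ℕ} (A : Matrix (Fin n) (Fin n) ℝ) (u : Fin n) : Fin n → ℝ :=
  fun i => A i u

/-- `ψ(M) = A·M² + B·M` where `A = -1/(λ₁μ)`, `B = 1/λ₁ + 1/μ`. -/
noncomputable def psiM {n : ℕ} (lam1 mu : ℝ) (M : Matrix (Fin n) (Fin n) ℝ) :
    Matrix (Fin n) (Fin n) ℝ :=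
  (-(1 / (lam1 * mu))) • (M * M) + (1 / lam1 + 1 / mu) • M

/-- `φ(M) = ψ(M)^r`. -/
noncomputable def phiM {n : ℕ} (lam1 mu : ℝ) (r : ℕ) (M : Matrix (Fin n) (Fin n) ℝ) :
    Matrix (Fin n) (Fin n) ℝ :=
  psiM lam1 mu M ^ r

/-- `ψ(t) = A·t² + B·t` where `A = -1/(λ₁μ)`, `B = 1/λ₁ + 1/μ`. -/
noncomputable def psiR (lam1 mu t : ℝ) : ℝ :=
  (-(1 / (lam1 * mu))) * t ^ 2 + (1 / lam1 + 1 / mu) * t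

/-- `φ(t) = ψ(t)^r`. -/
noncomputable def phiR (lam1 mu : ℝ) (r : ℕ) (t : ℝ) : ℝ := psiR lam1 mu t ^ r

end SBM

namespace SBM

theorem exists_orth {m : ℕ} {ι : Type} [Fintype ι] (h : Fintype.card ι < m) (w : ι → Fin m → ℝ) :
    ∃ x : Fin m → ℝ, x ≠ 0 ∧ ∀ i, w i ⬝ᵥ x = 0 := by
  have hk : LinearMap.ker (Matrix.mulVecLin (Matrix.of w)) ≠ ⊥ :=
    LinearMap.ker_ne_bot_of_finrank_lt (by simpa using h)
  obtain ⟨x, hx, hx0⟩ := (Submodule.ne_bot_iff _).1 hk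
  refine ⟨x, hx0, fun i => ?_⟩
  have := congrFun (LinearMap.mem_ker.1 hx) i
  simpa [Matrix.mulVec] using this

theorem parseval {n : ℕ} (v : Fin n → Fin n → ℝ)
    (hv : ∀ i j, dotProduct (v i) (v j) = if i = j then (1 : ℝ) else 0) (x : Fin n → ℝ) :
    x ⬝ᵥ x = ∑ j, (v j ⬝ᵥ x) ^ 2 := by
  have h1 : (Matrix.of v) * (Matrix.of v)ᵀ = 1 := by
    ext i j
    rw [Matrix.mul_apply]
    have := hv i j
    simpa [Matrix.one_apply, dotProduct] using this
  have h2 : (Matrix.of v)ᵀ * (Matrix.of v) = 1 := mul_eq_one_comm.1 h1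
  have h3 : ∑ j, (v j ⬝ᵥ x) ^ 2 = ((Matrix.of v) *ᵥ x) ⬝ᵥ ((Matrix.of v) *ᵥ x) := by
    simp [dotProduct, Matrix.mulVec, sq]
  rw [h3, Matrix.dotProduct_mulVec, ← Matrix.mulVec_transpose, Matrix.mulVec_mulVec, h2,
    Matrix.one_mulVec]

theorem quad_decomp {n : ℕ} {A : Matrix (Fin n) (Fin n) ℝ} {lam : Fin n → ℝ}
    {v : Fin n → Fin n → ℝ} (h : IsSpectralDecomp A lam v) (x : Fin n → ℝ) :
    x ⬝ᵥ (A *ᵥ x) = ∑ j, lam j * (v j ⬝ᵥ x) ^ 2 := by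
  rw [h.2.2, Matrix.sum_mulVec, dotProduct_sum]
  refine Finset.sum_congr rfl fun j _ => ?_
  rw [Matrix.smul_mulVec, Matrix.vecMulVec_mulVec, dotProduct_smul]
  simp [dotProduct_comm x, sq, mul_comm, mul_assoc, smul_dotProduct]

theorem quad_le {n : ℕ} {A : Matrix (Fin n) (Fin n) ℝ} {lam : Fin n → ℝ}
    {v : Fin n → Fin n → ℝ} (h : IsSpectralDecomp A lam v) (i : Fin n) (x : Fin n → ℝ)
    (hx : ∀ j, j < i → v j ⬝ᵥ x = 0) : x ⬝ᵥ (A *ᵥ x) ≤ lam i * (x ⬝ᵥ x) := by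
  rw [quad_decomp h, parseval v h.2.1, Finset.mul_sum]
  refine Finset.sum_le_sum fun j _ => ?_
  rcases lt_or_ge j i with hj | hj
  · simp [hx j hj]
  · exact mul_le_mul_of_nonneg_right (h.1 hj) (sq_nonneg _)

theorem le_quad {n : ℕ} {A : Matrix (Fin n) (Fin n) ℝ} {lam : Fin n → ℝ}
    {v : Fin n → Fin n → ℝ} (h : IsSpectralDecomp A lam v) (i : Fin n) (x : Fin n → ℝ)
    (hx : ∀ j, i < j → v j ⬝ᵥ x = 0) : lam i * (x ⬝ᵥ x) ≤ x ⬝ᵥ (A *ᵥ x) := by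
  rw [quad_decomp h, parseval v h.2.1, Finset.mul_sum]
  refine Finset.sum_le_sum fun j _ => ?_
  rcases lt_or_ge i j with hj | hj
  · simp [hx j hj]
  · exact mul_le_mul_of_nonneg_right (h.1 hj) (sq_nonneg _)

theorem dot_pos {n : ℕ} {x : Fin n → ℝ} (hx : x ≠ 0) : 0 < x ⬝ᵥ x := by
  have h0 : 0 ≤ x ⬝ᵥ x := Finset.sum_nonneg fun i _ => mul_self_nonneg _
  exact lt_of_le_of_ne h0 (fun h => hx (dotProduct_self_eq_zero.1 h.symm))

theorem card_gt {n : ℕ} (i : Fin n) : Fintype.card {j : Fin n // i < j} = n - 1 - i := by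
  rw [Fintype.card_subtype]
  simp [Finset.filter_lt_eq_Ioi, Fin.card_Ioi]

theorem card_lt {n : ℕ} (i : Fin n) : Fintype.card {j : Fin n // j < i} = i := by
  rw [Fintype.card_subtype]
  simp [Finset.filter_gt_eq_Iio, Fin.card_Iio]

theorem eig_le {n m : ℕ} {A : Matrix (Fin n) (Fin n) ℝ} {lam : Fin n → ℝ}
    {v : Fin n → Fin n → ℝ} (h : IsSpectralDecomp A lam v) (i : Fin n) (hm : m ≤ i)
    (g : Fin m → Fin n → ℝ) (c : ℝ)
    (hg : ∀ x, (∀ a, g a ⬝ᵥ x = 0) → x ⬝ᵥ (A *ᵥ x) ≤ c * (x ⬝ᵥ x)) : lam i ≤ c := by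
  obtain ⟨x, hx0, hx⟩ := exists_orth (m := n) (ι := {j : Fin n // i < j} ⊕ Fin m)
    (by rw [Fintype.card_sum, card_gt, Fintype.card_fin]; omega)
    (Sum.elim (fun j => v j.1) g)
  have h1 := le_quad h i x (fun j hj => hx (Sum.inl ⟨j, hj⟩))
  have h2 := hg x (fun a => hx (Sum.inr a))
  exact le_of_mul_le_mul_right (h1.trans h2) (dot_pos hx0)

theorem weyl {n : ℕ} {A B : Matrix (Fin n) (Fin n) ℝ} {lam lam' : Fin n → ℝ}
    {v v' : Fin n → Fin n → ℝ} (h : IsSpectralDecomp A lam v) (h' : IsSpectralDecomp B lam' v')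
    (e : ℝ) (hAB : ∀ x, x ⬝ᵥ (A *ᵥ x) ≤ x ⬝ᵥ (B *ᵥ x) + e * (x ⬝ᵥ x)) (i : Fin n) :
    lam i ≤ lam' i + e := by
  obtain ⟨x, hx0, hx⟩ := exists_orth (m := n) (ι := {j : Fin n // i < j} ⊕ {j : Fin n // j < i})
    (by rw [Fintype.card_sum, card_gt, card_lt]; omega)
    (Sum.elim (fun j => v j.1) (fun j => v' j.1))
  have h1 := le_quad h i x (fun j hj => hx (Sum.inl ⟨j, hj⟩))
  have h2 := quad_le h' i x (fun j hj => hx (Sum.inr ⟨j, hj⟩))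
  have h3 := hAB x
  refine le_of_mul_le_mul_right ?_ (dot_pos hx0)
  linarith

theorem spec_bound {n : ℕ} (E : Matrix (Fin n) (Fin n) ℝ) (x : Fin n → ℝ) :
    |x ⬝ᵥ (E *ᵥ x)| ≤ specNorm E * (x ⬝ᵥ x) := by
  set y : EuclideanSpace ℝ (Fin n) := WithLp.toLp 2 x
  have h1 : x ⬝ᵥ (E *ᵥ x) = inner ℝ y (Matrix.toEuclideanCLM (𝕜 := ℝ) E y) := by
    simp [y, EuclideanSpace.inner_eq_star_dotProduct, dotProduct_comm]
  have h2 : x ⬝ᵥ x = ‖y‖ * ‖y‖ := by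
    rw [← real_inner_self_eq_norm_mul_norm, EuclideanSpace.inner_eq_star_dotProduct]
    simp [y]
  rw [h1, h2, specNorm]
  refine (abs_real_inner_le_norm _ _).trans ?_
  have := ContinuousLinearMap.le_opNorm (Matrix.toEuclideanCLM (𝕜 := ℝ) E) y
  nlinarith [norm_nonneg y]

/-- Cluster sums. -/
def csum {n k : ℕ} (cl : Fin n → Fin k) (x : Fin n → ℝ) (a : Fin k) : ℝ :=
  ∑ u ∈ Finset.univ.filter (fun u => cl u = a), x u

theorem quad_mean (n k : ℕ) (p q : ℝ) (cl : Fin n → Fin k) (x : Fin n → ℝ) :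
    x ⬝ᵥ (meanMatrix n k p q cl *ᵥ x) = q * (∑ u, x u) ^ 2 + (p - q) * ∑ a, csum cl x a ^ 2 := by
  have h1 : ∑ a, csum cl x a ^ 2 = ∑ u, ∑ w, if cl u = cl w then x u * x w else 0 := by
    have : ∀ a, csum cl x a ^ 2
        = ∑ u, ∑ w, if cl u = a ∧ cl w = a then x u * x w else 0 := by
      intro a
      rw [csum, sq, Finset.sum_filter, Finset.sum_mul_sum]
      refine Finset.sum_congr rfl fun u _ => Finset.sum_congr rfl fun w _ => ?_
      by_cases h : cl u = a <;> by_cases h' : cl w = a <;> simp [h, h']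
    simp_rw [this]
    rw [Finset.sum_comm]
    refine Finset.sum_congr rfl fun u _ => ?_
    rw [Finset.sum_comm]
    refine Finset.sum_congr rfl fun w _ => ?_
    rw [Finset.sum_eq_single (cl u)]
    · simp [eq_comm]
    · intro b _ hb
      rw [if_neg]
      rintro ⟨h, _⟩
      exact hb h.symm
    · simp
  rw [h1, sq, Finset.sum_mul_sum, Finset.mul_sum, Finset.mul_sum, ← Finset.sum_add_distrib]
  simp only [dotProduct, Matrix.mulVec]
  refine Finset.sum_congr rfl fun u _ => ?_
  rw [Finset.mul_sum, Finset.mul_sum, Finset.mul_sum, ← Finset.sum_add_distrib]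
  refine Finset.sum_congr rfl fun w _ => ?_
  by_cases h : cl u = cl w <;> simp [meanMatrix, h] <;> ring

theorem dot_fiber {n k : ℕ} (cl : Fin n → Fin k) (x y : Fin n → ℝ) :
    x ⬝ᵥ y = ∑ a, ∑ u ∈ Finset.univ.filter (fun u => cl u = a), x u * y u := by
  rw [dotProduct, Finset.sum_fiberwise]

theorem mean_lower {n k : ℕ} {p q : ℝ} (hq : 0 ≤ q) (hpq : q < p) (cl : Fin n → Fin k)
    {s : ℝ} (hs0 : 0 < s) (hs : ∀ a, s ≤ clusterSize cl a) {lam : Fin n → ℝ}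
    {v : Fin n → Fin n → ℝ} (h : IsSpectralDecomp (meanMatrix n k p q cl) lam v)
    (i : Fin n) (hi : (i : ℕ) < k) : (p - q) * s ≤ lam i := by
  obtain ⟨y, hy0, hy⟩ := exists_orth (m := k) (ι := {j : Fin n // j < i})
    (by rw [card_lt]; exact hi) (fun j a => csum cl (v j.1) a)
  have hsurj : ∀ a, ∃ u, cl u = a := by
    intro a
    have h1 : (0 : ℝ) < clusterSize cl a := lt_of_lt_of_le hs0 (hs a)
    have h2 : 0 < clusterSize cl a := by exact_mod_cast h1
    obtain ⟨u, hu⟩ := Finset.card_pos.1 h2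
    exact ⟨u, by simpa using hu⟩
  have hx0 : (fun u => y (cl u)) ≠ 0 := by
    intro hx
    apply hy0
    ext a
    obtain ⟨u, rfl⟩ := hsurj a
    exact congrFun hx u
  have h1 := quad_le h i (fun u => y (cl u)) (by
    intro j hj
    rw [← hy ⟨j, hj⟩, dot_fiber cl]
    simp only [dotProduct, csum]
    refine Finset.sum_congr rfl fun a _ => ?_
    rw [Finset.sum_mul]
    refine Finset.sum_congr rfl fun u hu => ?_
    rw [(Finset.mem_filter.1 hu).2])
  have hc : ∀ a, csum cl (fun u => y (cl u)) a = clusterSize cl a * y a := by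
    intro a
    rw [csum, Finset.sum_congr rfl (g := fun _ => y a)]
    · simp [clusterSize]
    · intro u hu
      rw [(Finset.mem_filter.1 hu).2]
  have hd : (fun u => y (cl u)) ⬝ᵥ (fun u => y (cl u)) = ∑ a, clusterSize cl a * y a ^ 2 := by
    rw [dot_fiber cl]
    refine Finset.sum_congr rfl fun a _ => ?_
    rw [Finset.sum_congr rfl (g := fun _ => y a ^ 2)]
    · simp [clusterSize]
    · intro u hu
      rw [(Finset.mem_filter.1 hu).2, sq]
  refine le_of_mul_le_mul_right (le_trans ?_ h1) (dot_pos hx0)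
  rw [quad_mean, hd]
  have h3 : s * ∑ a, (clusterSize cl a : ℝ) * y a ^ 2
      ≤ ∑ a, csum cl (fun u => y (cl u)) a ^ 2 := by
    rw [Finset.mul_sum]
    refine Finset.sum_le_sum fun a _ => ?_
    rw [hc]
    have := mul_le_mul_of_nonneg_right (hs a)
      (show (0 : ℝ) ≤ clusterSize cl a * y a ^ 2 by positivity)
    nlinarith
  have h4 := mul_le_mul_of_nonneg_left h3 (sub_pos.2 hpq).le
  have h5 : 0 ≤ q * (∑ u, y (cl u)) ^ 2 := by positivity
  nlinarith

theorem mean_upper {n k : ℕ} {p q : ℝ} (hpq : q < p) (cl : Fin n → Fin k)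
    {s : ℝ} (hs : ∀ a, (clusterSize cl a : ℝ) ≤ s) {lam : Fin n → ℝ}
    {v : Fin n → Fin n → ℝ} (h : IsSpectralDecomp (meanMatrix n k p q cl) lam v)
    (i : Fin n) (hi : 1 ≤ (i : ℕ)) : lam i ≤ (p - q) * s := by
  refine eig_le h i hi (fun _ _ => 1) _ fun x hx => ?_
  have h0 : ∑ u, x u = 0 := by simpa [dotProduct] using hx 0
  rw [quad_mean, h0, mul_assoc]
  have : ∑ a, csum cl x a ^ 2 ≤ s * (x ⬝ᵥ x) := by
    rw [dot_fiber cl, Finset.mul_sum]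
    refine Finset.sum_le_sum fun a _ => ?_
    refine (sq_sum_le_card_mul_sum_sq).trans ?_
    simp only [sq]
    exact mul_le_mul_of_nonneg_right (hs a) (Finset.sum_nonneg fun u _ => mul_self_nonneg _)
  have := mul_le_mul_of_nonneg_left this (sub_pos.2 hpq).le
  linarith

theorem mean_zero {n k : ℕ} {p q : ℝ} (hq : 0 ≤ q) (hpq : q < p) (cl : Fin n → Fin k)
    {lam : Fin n → ℝ}
    {v : Fin n → Fin n → ℝ} (h : IsSpectralDecomp (meanMatrix n k p q cl) lam v)
    (i : Fin n) (hi : k ≤ (i : ℕ)) : lam i = 0 := by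
  apply le_antisymm
  · refine eig_le h i hi (fun a u => if cl u = a then 1 else 0) _ fun x hx => ?_
    have hc : ∀ a, csum cl x a = 0 := by
      intro a
      rw [← hx a, csum, Finset.sum_filter]
      simp [dotProduct]
    have h0 : ∑ u, x u = 0 := by
      rw [← Finset.sum_fiberwise _ cl]
      exact Finset.sum_eq_zero fun a _ => hc a
    rw [quad_mean, h0]
    simp [hc]
  · have hv : v i ⬝ᵥ v i = 1 := by simp [h.2.1]
    have h1 := quad_le h i (v i) (fun j hj => by simp [h.2.1, hj.ne])
    rw [quad_mean, hv] at h1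
    have h2 : 0 ≤ ∑ a, csum cl (v i) a ^ 2 := Finset.sum_nonneg fun a _ => sq_nonneg _
    have h3 := mul_nonneg (sub_pos.2 hpq).le h2
    have h4 := mul_nonneg hq (sq_nonneg (∑ u, v i u))
    linarith

theorem pow_close {L d x : ℝ} (hL : 1 < L) (hd : |1 - x| ≤ d) (hdL : d * L ≤ 3 / 40) :
    |x ^ ⌈L⌉₊ - 1| < 1 / 2 := by
  have hd0 : 0 ≤ d := (abs_nonneg _).trans hd
  have hr : (⌈L⌉₊ : ℝ) < L + 1 := Nat.ceil_lt_add_one (by linarith)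
  have hrd : (⌈L⌉₊ : ℝ) * d ≤ 3 / 20 := by nlinarith
  obtain ⟨h1, h2⟩ := abs_le.1 hd
  have hd1 : d ≤ 3 / 40 := by nlinarith
  rw [abs_lt]
  constructor
  · have h3 := one_add_mul_le_pow (a := x - 1) (by linarith) ⌈L⌉₊
    have h4 : (⌈L⌉₊ : ℝ) * (1 - x) ≤ ⌈L⌉₊ * d := by gcongr; 
    rw [add_sub_cancel] at h3
    nlinarith
  · have h3 : x ^ ⌈L⌉₊ ≤ (Real.exp d) ^ ⌈L⌉₊ := by
      gcongr
      · linarith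
      · linarith [Real.add_one_le_exp d]
    rw [← Real.exp_nat_mul] at h3
    have h4 : Real.exp (⌈L⌉₊ * d) ≤ Real.exp (3 / 20) := Real.exp_le_exp.2 hrd
    have h5 : Real.exp (3 / 20) ≤ 1 / (1 - 3 / 20) :=
      Real.exp_bound_div_one_sub_of_interval (by norm_num) (by norm_num)
    norm_num at h5 
    linarith

theorem one_sub_psi {l m t : ℝ} (hl : 0 < l) (hm : 0 < m) :
    1 - psiR l m t = (1 - t / l) * (1 - t / m) := by
  unfold psiR
  field_simp
  ring

theorem psi_top {L l m t : ℝ} (hL : 1 < L) (hm : 0 < m) (hl : m * (1 - 1 / (16 * L)) ≤ l)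
    (ht : |t - l| ≤ m / (100 * L)) : |1 - psiR l m t| ≤ 3 / 40 / L := by
  set c := 1 / L with hc
  have hc0 : 0 < c := by positivity
  have hc1 : c < 1 := by rw [hc, div_lt_one] <;> linarith
  have e1 : m * (1 - 1 / (16 * L)) = m * (1 - c / 16) := by rw [hc]; field_simp
  have e2 : m / (100 * L) = m * c / 100 := by rw [hc]; field_simp
  have e3 : 3 / 40 / L = 3 / 40 * c := by rw [hc]; field_simp
  rw [e1] at hl
  rw [e2] at ht
  rw [e3]
  have hl2 : m * (15 / 16) ≤ l := by nlinarith
  have hl0 : 0 < l := by linarith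
  rw [one_sub_psi hl0 hm]
  have e4 : (1 - t / l) * (1 - t / m) = ((l - t) * (m - t)) / (l * m) := by field_simp
  rw [e4, abs_div, abs_of_pos (mul_pos hl0 hm), div_le_iff₀ (mul_pos hl0 hm), abs_mul]
  rw [abs_sub_comm] at ht
  have h5 : |m - t| ≤ 3 * l := by
    obtain ⟨a, b⟩ := abs_le.1 ht
    rw [abs_le]
    constructor <;> nlinarith
  calc |l - t| * |m - t| ≤ (m * c / 100) * (3 * l) := by gcongr
    _ ≤ _ := by nlinarith [mul_pos (mul_pos hm hc0) hl0]

theorem psi_mid {L l m t : ℝ} (hL : 1 < L) (hm : 0 < m) (hl : m * (1 - 1 / (16 * L)) ≤ l)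
    (h1 : m * (1 - 1 / (16 * L)) - m / (100 * L) ≤ t)
    (h2 : t ≤ m * (1 + 1 / (16 * L)) + m / (100 * L)) (h3 : t ≤ l + m / (100 * L)) :
    |1 - psiR l m t| ≤ 3 / 40 / L := by
  set c := 1 / L with hc
  have hc0 : 0 < c := by positivity
  have hc1 : c < 1 := by rw [hc, div_lt_one] <;> linarith
  have e1 : m * (1 - 1 / (16 * L)) = m * (1 - c / 16) := by rw [hc]; field_simp
  have e1' : m * (1 + 1 / (16 * L)) = m * (1 + c / 16) := by rw [hc]; field_simp
  have e2 : m / (100 * L) = m * c / 100 := by rw [hc]; field_simp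
  have e3 : 3 / 40 / L = 3 / 40 * c := by rw [hc]; field_simp
  rw [e1] at hl
  rw [e1, e2] at h1
  rw [e1', e2] at h2
  rw [e2] at h3
  rw [e3]
  have hmc : 0 < m * c := mul_pos hm hc0
  have hl2 : m * (15 / 16) ≤ l := by nlinarith
  have hl0 : 0 < l := by linarith
  rw [one_sub_psi hl0 hm]
  have e4 : (1 - t / l) * (1 - t / m) = ((l - t) * (m - t)) / (l * m) := by field_simp
  rw [e4, abs_div, abs_of_pos (mul_pos hl0 hm), div_le_iff₀ (mul_pos hl0 hm), abs_mul]
  have h5 : |m - t| ≤ 29 / 400 * (m * c) := by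
    rw [abs_le]
    constructor <;> nlinarith
  have h6 : |l - t| ≤ l := by
    rw [abs_le]
    constructor <;> nlinarith
  calc |l - t| * |m - t| ≤ l * (29 / 400 * (m * c)) := by gcongr
    _ ≤ _ := by nlinarith [mul_pos hmc hl0]

theorem psi_small {L l m t : ℝ} (hL : 1 < L) (hm : 0 < m) (hl : m * (1 - 1 / (16 * L)) ≤ l)
    (ht : |t| ≤ m / (100 * L)) : |psiR l m t| ≤ (1 / 10) * L⁻¹ := by
  set c := L⁻¹ with hc
  have hc0 : 0 < c := by positivity
  have hc1 : c < 1 := inv_lt_one_of_one_lt₀ hL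
  have e1 : m * (1 - 1 / (16 * L)) = m * (1 - c / 16) := by rw [hc]; field_simp
  have e2 : m / (100 * L) = m * c / 100 := by rw [hc]; field_simp
  rw [e1] at hl
  rw [e2] at ht
  have hmc : 0 < m * c := mul_pos hm hc0
  have hl2 : m * (15 / 16) ≤ l := by nlinarith
  have hl0 : 0 < l := by linarith
  have e4 : psiR l m t = (t * (l + m - t)) / (l * m) := by
    unfold psiR; field_simp; ring
  rw [e4, abs_div, abs_of_pos (mul_pos hl0 hm), div_le_iff₀ (mul_pos hl0 hm), abs_mul]
  have h5 : |l + m - t| ≤ 4 * l := by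
    obtain ⟨a, b⟩ := abs_le.1 ht
    rw [abs_le]
    constructor <;> nlinarith
  calc |t| * |l + m - t| ≤ (m * c / 100) * (4 * l) := by gcongr
    _ ≤ _ := by nlinarith [mul_pos hmc hl0]

theorem pow_small {N x : ℝ} (hN : 1 < Real.log N) (hN0 : 0 < N)
    (hx : |x| ≤ (1 / 10) * (Real.log N)⁻¹) :
    |x ^ ⌈Real.log N⌉₊| < N ^ (-Real.log (Real.log N)) := by
  set L := Real.log N with hL
  have hL0 : 0 < L := by linarith
  have e : N ^ (-Real.log L) = (L⁻¹) ^ L := by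
    rw [Real.rpow_def_of_pos hN0, Real.rpow_def_of_pos (by positivity), Real.log_inv, ← hL]
    ring_nf
  rw [e, abs_pow]
  have hc1 : L⁻¹ < 1 := inv_lt_one_of_one_lt₀ hN
  have hc0 : 0 < L⁻¹ := by positivity
  have hx2 : |x| ^ ⌈L⌉₊ ≤ ((1 / 10) * L⁻¹) ^ ⌈L⌉₊ := by gcongr
  refine hx2.trans_lt ?_
  have h3 : ((1 / 10) * L⁻¹) ^ ⌈L⌉₊ < (L⁻¹) ^ ⌈L⌉₊ := by
    apply pow_lt_pow_left₀ (by linarith) (by positivity)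
    exact (Nat.ceil_pos.2 hL0).ne'
  refine h3.trans_le ?_
  rw [← Real.rpow_natCast]
  exact Real.rpow_le_rpow_of_exponent_ge hc0 hc1.le (Nat.le_ceil L)

theorem one_lt_log {n : ℕ} (hn : 3 ≤ n) : 1 < Real.log n := by
  rw [Real.lt_log_iff_exp_lt (by positivity)]
  have h1 := Real.exp_one_lt_d9
  have h2 : (3 : ℝ) ≤ n := by exact_mod_cast hn
  linarith

end SBM

open SBM in
/-- Claim on eigenvalues under the polynomial `φ`. Suppose `n ≥ 3`,
`k ≥ 2`, the partition is balanced, `E` is symmetric with `‖E‖₂ ≤ μ/(100 log n)` and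
`Ĝ = G + E`.  Then for `i ∈ [k]`, `|φ(λᵢ(Ĝ)) − 1| < 1/2` and `|φ(λᵢ(G)) − 1| < 1/2`, and
for `k < i ≤ n`, `|φ(λᵢ(Ĝ))| < n^{−log log n}`. -/
theorem phi_of_eigenvalues (n k : ℕ) (hn : 3 ≤ n) (hk : 2 ≤ k)
    (p q : ℝ) (hq : 0 ≤ q) (hpq : q < p) (hp : p ≤ 1)
    (cl : Fin n → Fin k) (hbal : Balanced n k cl)
    (E : Matrix (Fin n) (Fin n) ℝ) (hE : E.IsSymm)
    (hEnorm : specNorm E ≤ (p - q) * ((n : ℝ) / k) / (100 * Real.log n))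
    (lamG : Fin n → ℝ) (vG : Fin n → Fin n → ℝ)
    (hdecG : IsSpectralDecomp (meanMatrix n k p q cl) lamG vG)
    (lamH : Fin n → ℝ) (vH : Fin n → Fin n → ℝ)
    (hdecH : IsSpectralDecomp (meanMatrix n k p q cl + E) lamH vH) :
    ∀ i : Fin n,
      ((i : ℕ) < k →
        |phiR (lamG ⟨0, by omega⟩) ((p - q) * ((n : ℝ) / k)) ⌈Real.log n⌉₊ (lamH i) - 1|
            < 1 / 2 ∧
        |phiR (lamG ⟨0, by omega⟩) ((p - q) * ((n : ℝ) / k)) ⌈Real.log n⌉₊ (lamG i) - 1|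
            < 1 / 2) ∧
      (k ≤ (i : ℕ) →
        |phiR (lamG ⟨0, by omega⟩) ((p - q) * ((n : ℝ) / k)) ⌈Real.log n⌉₊ (lamH i)|
            < (n : ℝ) ^ (-Real.log (Real.log n))) := by
  have hL := one_lt_log hn
  have hn0 : (0 : ℝ) < n := by positivity
  have hk0 : (0 : ℝ) < k := by positivity
  have hnk : (0 : ℝ) < (n : ℝ) / k := by positivity
  have hpq' : 0 < p - q := sub_pos.2 hpq
  have hs0 : 0 < (1 - 1 / (16 * Real.log n)) * ((n : ℝ) / k) := by
    apply mul_pos _ hnk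
    rw [sub_pos, div_lt_one] <;> linarith
  have hlow := fun i hi => mean_lower hq hpq cl hs0 (fun a => (hbal a).1) hdecG i hi
  have hup := fun i hi => mean_upper hpq cl (fun a => (hbal a).2) hdecG i hi
  have hzero := fun i hi => mean_zero hq hpq cl hdecG i hi
  have hquad : ∀ x : Fin n → ℝ, x ⬝ᵥ ((meanMatrix n k p q cl + E) *ᵥ x)
      = x ⬝ᵥ (meanMatrix n k p q cl *ᵥ x) + x ⬝ᵥ (E *ᵥ x) := by
    intro x
    rw [Matrix.add_mulVec, dotProduct_add]
  have hw1 := weyl hdecH hdecG (specNorm E) (fun x => by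
    rw [hquad]
    linarith [(abs_le.1 (spec_bound E x)).2])
  have hw2 := weyl hdecG hdecH (specNorm E) (fun x => by
    rw [hquad]
    linarith [(abs_le.1 (spec_bound E x)).1])
  have hm : 0 < (p - q) * ((n : ℝ) / k) := mul_pos hpq' hnk
  have hl := hlow ⟨0, by omega⟩ (show 0 < k by omega)
  set l := lamG ⟨0, by omega⟩ with hldef
  set m := (p - q) * ((n : ℝ) / k) with hmdef
  set L := Real.log n with hLdef
  have ea : ∀ c : ℝ, (p - q) * (c * ((n : ℝ) / k)) = m * c := by
    intro c; rw [hmdef]; ring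
  simp only [ea] at hl hlow hup
  have hmL : 0 < m / (100 * L) := by positivity
  have key : ∀ i : Fin n, (i : ℕ) < k → ∀ t, |t - lamG i| ≤ m / (100 * L) →
      |phiR l m ⌈L⌉₊ t - 1| < 1 / 2 := by
    intro i hi t ht
    refine pow_close (d := 3 / 40 / L) hL ?_ (by field_simp; norm_num)
    rcases Nat.eq_zero_or_pos (i : ℕ) with h0 | h0
    · have : i = ⟨0, by omega⟩ := Fin.ext h0
      rw [this] at ht
      exact psi_top hL hm hl ht
    · obtain ⟨a, b⟩ := abs_le.1 ht
      have h1 := hlow i hi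
      have h2 := hup i h0
      have h3 : lamG i ≤ l := hdecG.1 (Fin.mk_le_of_le_val (Nat.zero_le _))
      exact psi_mid hL hm hl (by linarith) (by linarith) (by linarith)
  have hclose : ∀ i, |lamH i - lamG i| ≤ m / (100 * L) := by
    intro i
    rw [abs_le]
    constructor <;> linarith [hw1 i, hw2 i]
  intro i
  refine ⟨fun hi => ⟨key i hi _ (hclose i), key i hi _ (by simpa using hmL.le)⟩, fun hi => ?_⟩
  have ht := hclose i
  rw [hzero i hi, sub_zero] at ht
  exact pow_small hL hn0 (psi_small hL hm hl ht)
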